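/- There exists C = C(m,j,n) such that if u is a C^m function on the Euclidean ball B_r ⊂ ℝ^n and j ≤ m, then setting a = (m−j)/(m+n), one has r^j ‖∇^j u‖_{L^∞(B_r)} ≤ C( r^{-n} ‖u‖_{L¹(B_r)} + r^j ‖u‖_{L¹(B_r)}^a ‖∇^m u‖_{L^∞(B_r)}^{1−a} ). -/

import Mathlib

open MeasureTheory Metric

lemma gn_alg (m : ℕ) (g : ℝ → ℝ) (hg : ∀ η, 0 < η → 0 ≤ g η) :
    ∀ k, k < m → ∀ δ : ℝ, 0 < δ → δ ≤ 1 → ∃ Cc : ℝ, 0 ≤ Cc ∧ ∀ (A : ℝ) (B : ℕ → ℝ),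
      0 ≤ A → (∀ i, 0 ≤ B i) →
      (∀ η : ℝ, 0 < η → η ≤ 1 → B 0 ≤ g η * A + η * B 1) →
      (∀ i, i + 1 < m → ∀ η : ℝ, 0 < η → η ≤ 1 → B (i+1) ≤ 8 / η * B i + η * B (i+2)) →
      B k ≤ Cc * A + δ * B (k+1) := by
  intro k
  induction k with
  | zero =>
    intro _ δ h0 h1
    exact ⟨g δ, hg δ h0, fun A B _ _ h _ => h δ h0 h1⟩
  | succ k ih =>
    intro hk δ h0 h1
    obtain ⟨C', hC', h'⟩ := ih (by omega) (δ/32) (by positivity) (by linarith)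
    refine ⟨32 * C' / δ, by positivity, fun A B hA hB hz hs => ?_⟩
    have e1 := h' A B hA hB hz hs
    have e2 := hs k hk (δ/2) (by positivity) (by linarith)
    have e3 : 8 / (δ/2) * B k ≤ 8 / (δ/2) * (C' * A + δ/32 * B (k+1)) := by gcongr
    have e4 : 8 / (δ/2) * (C' * A + δ/32 * B (k+1)) = (32 * C' / δ * A + B (k+1)) / 2 := by
      field_simp; ring
    show B (k+1) ≤ _ + δ * B (k+2)
    linarith

lemma gn_alg2 (m : ℕ) (g : ℝ → ℝ) (hg : ∀ η, 0 < η → 0 ≤ g η) :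
    ∀ d j, j + d = m → ∃ Cc : ℝ, 0 ≤ Cc ∧ ∀ (A : ℝ) (B : ℕ → ℝ),
      0 ≤ A → (∀ i, 0 ≤ B i) →
      (∀ η : ℝ, 0 < η → η ≤ 1 → B 0 ≤ g η * A + η * B 1) →
      (∀ i, i + 1 < m → ∀ η : ℝ, 0 < η → η ≤ 1 → B (i+1) ≤ 8 / η * B i + η * B (i+2)) →
      B j ≤ Cc * A + B m := by
  intro d
  induction d with
  | zero =>
    intro j hj
    obtain rfl : j = m := by omega
    exact ⟨0, le_rfl, fun A B _ _ _ _ => by simp⟩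
  | succ d ih =>
    intro j hj
    obtain ⟨C1, h1, H1⟩ := ih (j+1) (by omega)
    obtain ⟨C2, h2, H2⟩ := gn_alg m g hg j (by omega) 1 one_pos le_rfl
    refine ⟨C1 + C2, by positivity, fun A B hA hB hz hs => ?_⟩
    have := H1 A B hA hB hz hs
    have := H2 A B hA hB hz hs
    linarith

lemma gn_opt (m j n : ℕ) (hj : j < m) (C r D A M : ℝ) (hr : 0 < r) (hC : 0 ≤ C)
    (hD : 0 ≤ D) (hA : 0 ≤ A) (hM : 0 ≤ M)
    (h : ∀ ρ : ℝ, 0 < ρ → ρ ≤ r → ρ ^ j * D ≤ C * ((ρ ^ n)⁻¹ * A + ρ ^ m * M)) :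
    r ^ j * D ≤ 2 * C * ((r ^ n)⁻¹ * A + r ^ j * A ^ (((m : ℝ) - j) / ((m : ℝ) + n)) *
              M ^ (1 - ((m : ℝ) - j) / ((m : ℝ) + n))) := by
  have hmn : (0:ℝ) < (m:ℝ) + n := by
    have : (0:ℝ) < m := by exact_mod_cast (by omega : 0 < m)
    positivity
  set a : ℝ := ((m : ℝ) - j) / ((m : ℝ) + n) with ha
  rcases le_or_gt (M * r ^ (m+n)) A with hc | hc
  · have h1 : r ^ m * M ≤ (r ^ n)⁻¹ * A := by
      rw [inv_mul_eq_div, le_div_iff₀ (by positivity)]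
      calc _ = M * r ^ (m+n) := by ring
        _ ≤ A := hc
    have h2 := h r hr le_rfl
    have h3 : 0 ≤ r ^ j * A ^ a * M ^ (1-a) := by positivity
    calc _ ≤ _ := h2
      _ ≤ C * ((r ^ n)⁻¹ * A + (r ^ n)⁻¹ * A) := by gcongr
      _ = 2 * C * ((r ^ n)⁻¹ * A + 0) := by ring
      _ ≤ _ := by gcongr
  have hMp : 0 < M := by
    rcases hM.eq_or_lt with h0 | h0
    · rw [← h0] at hc; linarith [hc]
    · exact h0
  obtain ⟨d, rfl⟩ : ∃ d, m = j + d := ⟨m - j, by omega⟩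
  have hd : 0 < d := by omega
  rcases hA.eq_or_lt with h0 | hAp
  · have key : ∀ ρ : ℝ, 0 < ρ → ρ ≤ r → D ≤ C * (ρ ^ d * M) := by
      intro ρ h1 h2
      have := h ρ h1 h2
      rw [← h0, mul_zero, zero_add, pow_add] at this
      have h3 : 0 < ρ ^ j := by positivity
      refine le_of_mul_le_mul_left ?_ h3
      linarith
    have hlim : Filter.Tendsto (fun ρ : ℝ => C * (ρ ^ d * M)) (nhdsWithin 0 (Set.Ioi 0)) (nhds 0) := by
      have : Continuous (fun ρ : ℝ => C * (ρ ^ d * M)) := by fun_prop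
      have h2 := this.tendsto 0
      simp only [zero_pow hd.ne', zero_mul, mul_zero] at h2
      exact h2.mono_left nhdsWithin_le_nhds
    have hD0 : D ≤ 0 := by
      refine ge_of_tendsto hlim ?_
      filter_upwards [Ioc_mem_nhdsGT hr] with ρ hρ
      exact key ρ hρ.1 hρ.2
    have : D = 0 := le_antisymm hD0 hD
    rw [this, mul_zero]
    positivity
  · set ρ : ℝ := (A / M) ^ (((j + d : ℕ) : ℝ) + n)⁻¹ with hρ
    have hAM : 0 < A / M := by positivity
    have hρ0 : 0 < ρ := by positivity
    have hpow : ρ ^ (j + d + n) = A / M := by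
      rw [hρ, ← Real.rpow_natCast, ← Real.rpow_mul hAM.le]
      have : (((j + d : ℕ) : ℝ) + n)⁻¹ * ((j + d + n : ℕ) : ℝ) = 1 := by
        rw [Nat.cast_add (j+d) n]; exact inv_mul_cancel₀ hmn.ne'
      rw [this, Real.rpow_one]
    have hρr : ρ ≤ r := by
      refine le_of_lt (lt_of_pow_lt_pow_left₀ (j+d+n) hr.le ?_)
      rw [hpow, div_lt_iff₀ hMp]; linarith
    have hpd : ρ ^ d = (A / M) ^ a := by
      rw [hρ, ← Real.rpow_natCast, ← Real.rpow_mul hAM.le, ha]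
      congr 1
      push_cast
      rw [inv_mul_eq_div]; congr 1; ring
    have hX : A ^ a * M ^ (1 - a) = ρ ^ d * M := by
      rw [hpd, Real.div_rpow hA hM, Real.rpow_sub hMp, Real.rpow_one]
      field_simp
    have hA' : (ρ ^ n)⁻¹ * A = ρ ^ (j + d) * M := by
      have : A = ρ ^ (j+d+n) * M := by rw [hpow]; field_simp
      rw [this, pow_add ρ (j+d) n]; field_simp
    have h1 := h ρ hρ0 hρr
    rw [hA', pow_add] at h1
    have h2 : D ≤ 2 * C * (ρ ^ d * M) := by
      have h3 : 0 < ρ ^ j := by positivity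
      refine le_of_mul_le_mul_left ?_ h3
      linarith
    have h4 : 0 ≤ (r ^ n)⁻¹ * A := by positivity
    rw [mul_assoc (r^j), hX]
    calc r ^ j * D ≤ r ^ j * (2 * C * (ρ ^ d * M)) := by gcongr
      _ = 2 * C * (0 + r ^ j * (ρ ^ d * M)) := by ring
      _ ≤ _ := by gcongr

lemma gn_geom {E : Type*} [NormedAddCommGroup E] [NormedSpace ℝ E] (r ε : ℝ) (hε : 0 < ε)
    (h : ε ≤ r) (x : E) (hx : x ∈ ball (0:E) r) :
    ∃ y : E, ball y (ε/2) ⊆ ball 0 r ∧ ball y (ε/2) ⊆ ball x ε := by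
  have hr : 0 < r := by linarith
  rw [mem_ball_zero_iff] at hx
  have ht : ε / (2*r) * r = ε / 2 := by field_simp
  have ht0 : 0 < ε / (2*r) := by positivity
  have ht1 : ε / (2*r) ≤ 1 := by rw [div_le_one (by positivity)]; linarith
  refine ⟨(1 - ε/(2*r)) • x, ball_subset_ball' ?_, ball_subset_ball' ?_⟩
  · rw [dist_zero_right, norm_smul, Real.norm_of_nonneg (by linarith)]
    have : (1 - ε/(2*r)) * ‖x‖ ≤ (1 - ε/(2*r)) * r :=
      mul_le_mul_of_nonneg_left hx.le (by linarith)
    linarith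
  · have : (1 - ε/(2*r)) • x - x = (-(ε/(2*r))) • x := by module
    rw [dist_eq_norm, this, norm_smul, norm_neg, Real.norm_of_nonneg ht0.le]
    have : ε/(2*r) * ‖x‖ ≤ ε/(2*r) * r := mul_le_mul_of_nonneg_left hx.le ht0.le
    linarith

lemma gn_landau {E V : Type*} [NormedAddCommGroup E] [NormedSpace ℝ E]
    [NormedAddCommGroup V] [NormedSpace ℝ V] (r ε P Q : ℝ) (hε : 0 < ε) (h : ε ≤ r)
    (hQ : 0 ≤ Q) (F : E → V)
    (hF : DifferentiableOn ℝ F (ball 0 r)) (hP : ∀ z ∈ ball (0:E) r, ‖F z‖ ≤ P)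
    (x : E) (hx : x ∈ ball (0:E) r)
    (hQb : ∀ z ∈ ball (0:E) r, ‖fderivWithin ℝ F (ball 0 r) z - fderivWithin ℝ F (ball 0 r) x‖
      ≤ Q * ‖z - x‖) :
    ‖fderivWithin ℝ F (ball 0 r) x‖ ≤ 8 / ε * P + ε * Q := by
  obtain ⟨y, hy1, hy2⟩ := gn_geom r ε hε h x hx
  have hyy : y ∈ ball y (ε/2) := mem_ball_self (by positivity)
  have key : ∀ w : E, w ∈ closedBall (0:E) (ε/4) →
      ‖fderivWithin ℝ F (ball 0 r) x w‖ ≤ 2 * P + Q * ε * (ε / 4) := by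
    intro w hw
    rw [mem_closedBall_zero_iff] at hw
    have hp : y + w ∈ ball y (ε/2) := by
      rw [mem_ball, dist_eq_norm, add_sub_cancel_left]; linarith
    have := Convex.norm_image_sub_le_of_norm_hasFDerivWithin_le'
      (f := F) (f' := fderivWithin ℝ F (ball 0 r)) (φ := fderivWithin ℝ F (ball 0 r) x)
      (C := Q * ε) (s := ball y (ε/2)) (x := y) (y := y + w)
      (fun z hz => ((hF z (hy1 hz)).hasFDerivWithinAt).mono hy1)
      (fun z hz => (hQb z (hy1 hz)).trans (by
        have := hy2 hz
        rw [mem_ball, dist_eq_norm] at this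
        gcongr)) (convex_ball _ _) hyy hp
    rw [add_sub_cancel_left] at this
    have h1 := hP _ (hy1 hp)
    have h2 := hP _ (hy1 hyy)
    have h3 : fderivWithin ℝ F (ball 0 r) x w = F (y+w) - F y -
      (F (y+w) - F y - fderivWithin ℝ F (ball 0 r) x w) := by abel
    have h4 : Q * ε * ‖w‖ ≤ Q * ε * (ε/4) := by gcongr
    rw [h3]
    refine (norm_sub_le _ _).trans ?_
    have := norm_sub_le (F (y+w)) (F y)
    linarith
  have hP0 : 0 ≤ P := (norm_nonneg _).trans (hP x hx)
  refine ContinuousLinearMap.opNorm_le_bound _ (by positivity) fun v => ?_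
  rcases eq_or_ne v 0 with rfl | hv
  · simp
  have hv0 : 0 < ‖v‖ := norm_pos_iff.2 hv
  have ht : 0 < ε / 4 / ‖v‖ := by positivity
  have h1 := key ((ε / 4 / ‖v‖) • v) (by
    rw [mem_closedBall_zero_iff, norm_smul, Real.norm_of_nonneg ht.le, div_mul_cancel₀ _ hv0.ne'])
  rw [map_smul, norm_smul, Real.norm_of_nonneg ht.le] at h1
  refine le_of_mul_le_mul_left (h1.trans (le_of_eq ?_)) ht
  field_simp
  ring

lemma gn_lip {E : Type*} [NormedAddCommGroup E] [NormedSpace ℝ E] (r : ℝ) (m k : ℕ) (hk : k < m)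
    (u : E → ℝ) (hu : ContDiffOn ℝ m u (ball 0 r)) (Q : ℝ)
    (hQ : ∀ z ∈ ball (0:E) r, ‖iteratedFDerivWithin ℝ (k+1) u (ball 0 r) z‖ ≤ Q) :
    ∀ z ∈ ball (0:E) r, ∀ x ∈ ball (0:E) r,
      ‖iteratedFDerivWithin ℝ k u (ball 0 r) z - iteratedFDerivWithin ℝ k u (ball 0 r) x‖
        ≤ Q * ‖z - x‖ := by
  intro z hz x hx
  refine Convex.norm_image_sub_le_of_norm_fderivWithin_le
    (hu.differentiableOn_iteratedFDerivWithin (by exact_mod_cast hk) isOpen_ball.uniqueDiffOn)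
    (fun y hy => ?_) (convex_ball _ _) hx hz
  rw [norm_fderivWithin_iteratedFDerivWithin]
  exact hQ y hy

lemma gn_step {E : Type*} [NormedAddCommGroup E] [NormedSpace ℝ E] (r : ℝ) (m k : ℕ)
    (hk : k + 1 < m)
    (u : E → ℝ) (hu : ContDiffOn ℝ m u (ball 0 r)) (P Q ε : ℝ) (hε : 0 < ε) (hεr : ε ≤ r)
    (hP : ∀ z ∈ ball (0:E) r, ‖iteratedFDerivWithin ℝ k u (ball 0 r) z‖ ≤ P)
    (hQ : ∀ z ∈ ball (0:E) r, ‖iteratedFDerivWithin ℝ (k+2) u (ball 0 r) z‖ ≤ Q) :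
    ∀ x ∈ ball (0:E) r, ‖iteratedFDerivWithin ℝ (k+1) u (ball 0 r) x‖ ≤ 8 / ε * P + ε * Q := by
  intro x hx
  rw [← norm_fderivWithin_iteratedFDerivWithin]
  refine gn_landau r ε P Q hε hεr ((norm_nonneg _).trans (hQ x hx)) _
    (hu.differentiableOn_iteratedFDerivWithin (by exact_mod_cast (by omega : k < m))
      isOpen_ball.uniqueDiffOn) hP x hx ?_
  intro z hz
  have := gn_lip r m (k+1) hk u hu Q hQ z hz x hx
  rw [fderivWithin_iteratedFDerivWithin]
  simp only [Function.comp]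
  rw [← dist_eq_norm, LinearIsometryEquiv.dist_map, dist_eq_norm]
  exact this

lemma gn_bdd {E : Type*} [NormedAddCommGroup E] [NormedSpace ℝ E] (r : ℝ) (hr : 0 < r) (m : ℕ)
    (u : E → ℝ) (hu : ContDiffOn ℝ m u (ball 0 r)) (M : ℝ)
    (hM : ∀ z ∈ ball (0:E) r, ‖iteratedFDerivWithin ℝ m u (ball 0 r) z‖ ≤ M) :
    ∀ d k, k + d = m → ∃ P, ∀ z ∈ ball (0:E) r, ‖iteratedFDerivWithin ℝ k u (ball 0 r) z‖ ≤ P := by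
  intro d
  induction d with
  | zero => intro k hk; obtain rfl : k = m := by omega
            exact ⟨M, hM⟩
  | succ d ih =>
    intro k hk
    obtain ⟨Q, hQ⟩ := ih (k+1) (by omega)
    have h0 : (0:E) ∈ ball (0:E) r := mem_ball_self hr
    have hQ0 : 0 ≤ Q := (norm_nonneg _).trans (hQ 0 h0)
    refine ⟨Q * r + ‖iteratedFDerivWithin ℝ k u (ball 0 r) 0‖, fun z hz => ?_⟩
    have h1 := gn_lip r m k (by omega) u hu Q hQ z hz 0 h0
    have h2 := norm_sub_norm_le (iteratedFDerivWithin ℝ k u (ball 0 r) z)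
      (iteratedFDerivWithin ℝ k u (ball 0 r) 0)
    have h3 : Q * ‖z - 0‖ ≤ Q * r := by
      rw [mem_ball, dist_eq_norm] at hz; gcongr
    linarith

lemma gn_zero (n m : ℕ) (hm : 0 < m) (r : ℝ) (u : EuclideanSpace ℝ (Fin n) → ℝ)
    (hu : ContDiffOn ℝ m u (ball 0 r)) (P Q ε : ℝ) (hε : 0 < ε) (hεr : ε ≤ r)
    (hP : ∀ z ∈ ball (0:EuclideanSpace ℝ (Fin n)) r,
      ‖iteratedFDerivWithin ℝ 0 u (ball 0 r) z‖ ≤ P)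
    (hQ : ∀ z ∈ ball (0:EuclideanSpace ℝ (Fin n)) r,
      ‖iteratedFDerivWithin ℝ 1 u (ball 0 r) z‖ ≤ Q) :
    ∀ x ∈ ball (0:EuclideanSpace ℝ (Fin n)) r, ‖iteratedFDerivWithin ℝ 0 u (ball 0 r) x‖ ≤
      ((ε/2)^n * volume.real (ball (0:EuclideanSpace ℝ (Fin n)) 1))⁻¹ *
        (∫ z in ball (0 : EuclideanSpace ℝ (Fin n)) r, |u z|) + ε * Q := by
  intro x hx
  obtain ⟨y, hy1, hy2⟩ := gn_geom r ε hε hεr x hx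
  have hQ0 : 0 ≤ Q := (norm_nonneg _).trans (hQ x hx)
  have hvol : volume.real (ball y (ε/2)) =
      (ε/2)^n * volume.real (ball (0:EuclideanSpace ℝ (Fin n)) 1) := by
    rw [measureReal_def, Measure.addHaar_ball_of_pos _ _ (by positivity), ENNReal.toReal_mul,
      finrank_euclideanSpace_fin, ENNReal.toReal_ofReal (by positivity), measureReal_def]
  have hvp : 0 < volume.real (ball y (ε/2)) := by
    rw [measureReal_def]
    exact ENNReal.toReal_pos (measure_ball_pos _ _ (by positivity)).ne' measure_ball_lt_top.ne
  rw [← hvol]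
  have hint : IntegrableOn (fun z => |u z|) (ball (0 : EuclideanSpace ℝ (Fin n)) r) := by
    refine IntegrableOn.of_bound measure_ball_lt_top ?_ P ?_
    · exact (hu.continuousOn.abs).aestronglyMeasurable measurableSet_ball
    · refine (ae_restrict_iff' measurableSet_ball).2 (Filter.Eventually.of_forall fun z hz => ?_)
      have := hP z hz
      rw [norm_iteratedFDerivWithin_zero] at this
      simpa using this
  have hpt : ∀ z ∈ ball y (ε/2), |u x| - ε * Q ≤ |u z| := by
    intro z hz
    have h1 := gn_lip r m 0 hm u hu Q hQ x hx z (hy1 hz)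
    have h2 := (norm_sub_norm_le _ _).trans h1
    rw [norm_iteratedFDerivWithin_zero, norm_iteratedFDerivWithin_zero, Real.norm_eq_abs,
      Real.norm_eq_abs] at h2
    have h3 := hy2 hz
    rw [mem_ball', dist_eq_norm] at h3
    have : Q * ‖x - z‖ ≤ Q * ε := by gcongr
    linarith
  have h1 : ∫ z in ball y (ε/2), (|u x| - ε * Q) ≤ ∫ z in ball y (ε/2), |u z| :=
    setIntegral_mono_on (integrableOn_const measure_ball_lt_top.ne)
      (hint.mono_set hy1) measurableSet_ball hpt
  have h2 : ∫ z in ball y (ε/2), |u z| ≤ ∫ z in ball (0 : EuclideanSpace ℝ (Fin n)) r, |u z| :=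
    setIntegral_mono_set hint (Filter.Eventually.of_forall fun z => abs_nonneg _)
      (Filter.Eventually.of_forall hy1)
  rw [setIntegral_const, smul_eq_mul] at h1
  rw [norm_iteratedFDerivWithin_zero, Real.norm_eq_abs]
  have h3 : |u x| - ε * Q ≤ (volume.real (ball y (ε/2)))⁻¹ *
      ∫ z in ball (0 : EuclideanSpace ℝ (Fin n)) r, |u z| := by
    rw [inv_mul_eq_div, le_div_iff₀ hvp]; linarith
  linarith

theorem stmt_15 (m j n : ℕ) (hj : j ≤ m) :
    ∃ C : ℝ, ∀ r : ℝ, 0 < r → ∀ u : EuclideanSpace ℝ (Fin n) → ℝ,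
      ContDiffOn ℝ m u (ball 0 r) →
      ∀ M : ℝ,
      (∀ x ∈ ball (0 : EuclideanSpace ℝ (Fin n)) r,
        ‖iteratedFDerivWithin ℝ m u (ball 0 r) x‖ ≤ M) →
      ∀ x ∈ ball (0 : EuclideanSpace ℝ (Fin n)) r,
        r ^ j * ‖iteratedFDerivWithin ℝ j u (ball 0 r) x‖ ≤
          C * ((r ^ n)⁻¹ * (∫ z in ball (0 : EuclideanSpace ℝ (Fin n)) r, |u z|) +
            r ^ j * (∫ z in ball (0 : EuclideanSpace ℝ (Fin n)) r, |u z|) ^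
                (((m : ℝ) - j) / ((m : ℝ) + n)) *
              M ^ (1 - ((m : ℝ) - j) / ((m : ℝ) + n))) := by
  have hAnn : ∀ (r : ℝ) (u : EuclideanSpace ℝ (Fin n) → ℝ),
      0 ≤ ∫ z in ball (0 : EuclideanSpace ℝ (Fin n)) r, |u z| :=
    fun r u => integral_nonneg fun z => abs_nonneg _
  rcases hj.eq_or_lt with rfl | hlt
  · refine ⟨1, fun r hr u hu M hM x hx => ?_⟩
    have h1 := hM x hx
    have h2 := hAnn r u
    have h3 : 0 ≤ (r ^ n)⁻¹ * (∫ z in ball (0 : EuclideanSpace ℝ (Fin n)) r, |u z|) := by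
      positivity
    simp only [sub_self, zero_div, Real.rpow_zero, mul_one, sub_zero, Real.rpow_one, one_mul]
    have : r ^ j * ‖iteratedFDerivWithin ℝ j u (ball 0 r) x‖ ≤ r ^ j * M := by gcongr
    linarith
  set ω : ℝ := volume.real (ball (0:EuclideanSpace ℝ (Fin n)) 1) with hω
  have hω0 : 0 ≤ ω := measureReal_nonneg
  obtain ⟨C, hC, H⟩ := gn_alg2 m (fun η => ((η/2)^n * ω)⁻¹) (fun η hη => by positivity)
    (m - j) j (by omega)
  refine ⟨2 * (C + 1), fun r hr u hu M hM x hx => ?_⟩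
  have hbdd : ∀ k, k ≤ m → ∃ P, ∀ z ∈ ball (0:EuclideanSpace ℝ (Fin n)) r,
      ‖iteratedFDerivWithin ℝ k u (ball 0 r) z‖ ≤ P :=
    fun k hk => gn_bdd r hr m u hu M hM (m-k) k (by omega)
  set N : ℕ → ℝ := fun k => sSup ((fun z => ‖iteratedFDerivWithin ℝ k u (ball 0 r) z‖) ''
    ball (0:EuclideanSpace ℝ (Fin n)) r) with hN
  have hne : (ball (0:EuclideanSpace ℝ (Fin n)) r).Nonempty := ⟨x, hx⟩
  have hNle : ∀ k, k ≤ m → ∀ z ∈ ball (0:EuclideanSpace ℝ (Fin n)) r,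
      ‖iteratedFDerivWithin ℝ k u (ball 0 r) z‖ ≤ N k := by
    intro k hk z hz
    obtain ⟨P, hP⟩ := hbdd k hk
    refine le_csSup ⟨P, ?_⟩ ⟨z, hz, rfl⟩
    rintro _ ⟨w, hw, rfl⟩
    exact hP w hw
  have hNsup : ∀ k (P : ℝ), (∀ z ∈ ball (0:EuclideanSpace ℝ (Fin n)) r,
      ‖iteratedFDerivWithin ℝ k u (ball 0 r) z‖ ≤ P) → N k ≤ P := by
    intro k P hP
    refine csSup_le (hne.image _) ?_
    rintro _ ⟨w, hw, rfl⟩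
    exact hP w hw
  have hN0 : ∀ k, 0 ≤ N k := by
    intro k
    refine Real.sSup_nonneg ?_
    rintro _ ⟨w, hw, rfl⟩
    exact norm_nonneg _
  have hA := hAnn r u
  set A : ℝ := ∫ z in ball (0 : EuclideanSpace ℝ (Fin n)) r, |u z| with hAdef
  have hM0 : 0 ≤ M := (norm_nonneg _).trans (hM x hx)
  refine gn_opt m j n hlt (C+1) r _ A M hr (by positivity) (norm_nonneg _) hA hM0 ?_
  intro ρ hρ hρr
  have key := H ((ρ^n)⁻¹ * A) (fun k => ρ ^ k * N k) (by positivity)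
    (fun i => mul_nonneg (by positivity) (hN0 i)) ?_ ?_
  · have h1 : ρ ^ j * ‖iteratedFDerivWithin ℝ j u (ball 0 r) x‖ ≤ ρ ^ j * N j := by
      gcongr; exact hNle j hj x hx
    have h2 : ρ ^ m * N m ≤ ρ ^ m * M := by
      gcongr; exact hNsup m M hM
    have h3 : 0 ≤ (ρ^n)⁻¹ * A := by positivity
    have h4 : 0 ≤ C * (ρ ^ m * M) := by positivity
    linarith
  · intro η h0 h1
    have hηρ : η * ρ ≤ r := (mul_le_of_le_one_left hρ.le h1).trans hρr
    have := hNsup 0 _ (gn_zero n m (by omega) r u hu (N 0) (N 1) (η * ρ) (by positivity) hηρ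
      (hNle 0 (by omega)) (hNle 1 (by omega)))
    rw [← hω, ← hAdef] at this
    simp only [pow_zero, one_mul, pow_one]
    refine this.trans (le_of_eq ?_)
    rw [show η * ρ / 2 = η / 2 * ρ by ring, mul_pow, mul_inv, mul_inv, mul_inv]
    ring
  · intro i hi η h0 h1
    have hηρ : η * ρ ≤ r := (mul_le_of_le_one_left hρ.le h1).trans hρr
    have := hNsup (i+1) _ (gn_step r m i hi u hu (N i) (N (i+2)) (η * ρ) (by positivity) hηρ
      (hNle i (by omega)) (hNle (i+2) (by omega)))
    calc ρ ^ (i+1) * N (i+1) ≤ ρ ^ (i+1) * (8 / (η * ρ) * N i + η * ρ * N (i+2)) := by gcongr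
      _ = _ := by field_simp; ring
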